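/- Let k be a field of characteristic 0 and n = 8. The k-vector space R_{(1,1,1,1,1,1,1,1)} of SL₂(k)-invariant multihomogeneous polynomials of multidegree (1,1,1,1,1,1,1,1) has dimension 14. (This is the degree 1 piece of the graded ring whose Proj is the GIT quotient M₈ = (ℙ¹)⁸ // Aut(ℙ¹), which therefore naturally lies in ℙ¹³.) -/

import Mathlib

/-!
A multilinear form `f` in `n` points of `k²` is determined by its values `c(S)` at the points whose
`i`-th component is `(0, 1)` for `i ∈ S` and `(1, 0)` for `i ∉ S`. If `f` is invariant and `n = 2m`,
the diagonal torus forces `c(S) = 0` unless `|S| = m`, and then the shear `((1, 0), (1, 1))` forces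
`∑_{S ⊆ T} c(S) = 0` whenever `|T| > m`. In the other direction, products of brackets are invariant.

Both sides are compared with the ballot number `b(n, m) = C(n, m) - C(n, m + 1)`, `n ≤ 2m + 1`,
which obeys Pascal's rule with `b(2m + 1, m) = 0`. The functions `c` on the `m`-subsets of an
`n`-set with the vanishing sums above have dimension at most `b(n, m)`: separating the sets that
contain a chosen point from the others gives the recursion, and inclusion-exclusion shows that no
nonzero `c` is left when `n > 2m`. The products of brackets and of variables `x_i` attached to
partial matchings of `n` points with `n - m` edges span at least `b(n, m)` dimensions: specializing
the last point to `(0, 1)` turns a bracket `[u, last]` into `x_u`, so it maps onto the forms in one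
point fewer, and its kernel contains the multiples of `x_last`. For `n = 2m` both bounds equal the
Catalan number `b(2m, m)`.
-/

open MvPolynomial

/-- The polynomial ring `A = k[x_1, y_1, …, x_n, y_n]`: variable `(i, 0)` is `x_i`
and `(i, 1)` is `y_i`. -/
abbrev PtRing (k : Type) [CommRing k] (n : ℕ) := MvPolynomial (Fin n × Fin 2) k

/-- The bracket `[ab] = x_a y_b − x_b y_a`. -/
noncomputable def bracket (k : Type) [CommRing k] (n : ℕ) (a b : Fin n) : PtRing k n :=
  X (a, 0) * X (b, 1) - X (b, 0) * X (a, 1)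

/-- The graph monomial `m_Γ = ∏_{(a,b) ∈ Γ} [ab]` of a directed graph `Γ`,
viewed as a multiset of directed edges. -/
noncomputable def graphMonomial (k : Type) [CommRing k] (n : ℕ)
    (Γ : Multiset (Fin n × Fin n)) : PtRing k n :=
  (Γ.map fun e => bracket k n e.1 e.2).prod

/-- The `k`-algebra endomorphism of `A` induced by a `2×2` matrix `g = ((p,q),(r,s))`:
`x_i ↦ p·x_i + r·y_i` and `y_i ↦ q·x_i + s·y_i`. -/
noncomputable def subst (k : Type) [CommRing k] (n : ℕ) (g : Matrix (Fin 2) (Fin 2) k) :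
    PtRing k n →ₐ[k] PtRing k n :=
  aeval fun p =>
    if p.2 = 0 then C (g 0 0) * X (p.1, 0) + C (g 1 0) * X (p.1, 1)
    else C (g 0 1) * X (p.1, 0) + C (g 1 1) * X (p.1, 1)

/-- The valence vector of a directed graph: the `i`-th entry is the number of edges
(with multiplicity) having `i` as an endpoint. -/
def valence (n : ℕ) (Γ : Multiset (Fin n × Fin n)) : Fin n → ℕ :=
  fun i => (Γ.map Prod.fst).count i + (Γ.map Prod.snd).count i

/-- `R_v`: the space of `SL₂(k)`-invariant multihomogeneous polynomials of multidegree `v`. -/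
noncomputable def Rv (k : Type) [CommRing k] (n : ℕ) (v : Fin n → ℕ) :
    Submodule k (PtRing k n) :=
  (⨅ g : Matrix.SpecialLinearGroup (Fin 2) k,
      LinearMap.ker ((subst k n (g : Matrix (Fin 2) (Fin 2) k)).toLinearMap
        - (LinearMap.id : PtRing k n →ₗ[k] PtRing k n))) ⊓
  weightedHomogeneousSubmodule k (fun p : Fin n × Fin 2 => Finsupp.single p.1 1)
    (Finsupp.equivFunOnFinite.symm v)

open Finset Module

theorem finrank_map_add_finrank_inf_ker {K V V' : Type*} [DivisionRing K] [AddCommGroup V]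
    [Module K V] [AddCommGroup V'] [Module K V'] (f : V →ₗ[K] V') (p : Submodule K V)
    [FiniteDimensional K p] :
    finrank K (p.map f) + finrank K ↥(p ⊓ LinearMap.ker f) = finrank K p := by
  rw [← (f.domRestrict p).finrank_range_add_finrank_ker, LinearMap.range_domRestrict,
    LinearMap.ker_domRestrict, ← Submodule.map_comap_subtype, Submodule.finrank_map_subtype_eq]

theorem catalan_add_choose_succ (m : ℕ) :
    catalan m + (2 * m).choose (m + 1) = (2 * m).choose m := by
  have hcat : (m + 1) * catalan m = (2 * m).choose m := succ_mul_catalan_eq_centralBinom m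
  have hchoose : (2 * m).choose (m + 1) * (m + 1) = (2 * m).choose m * m := by
    rw [Nat.choose_succ_right_eq, two_mul, Nat.add_sub_cancel]
  nlinarith

section PrimitiveFunctions

variable {α : Type*}

/-- The functions `c` on the `m`-subsets of `A` whose sum over the `m`-subsets of `T` vanishes for
every `T ⊆ A` with more than `m` elements. Such a `c` is encoded as a function on all finsets that
is zero off the `m`-subsets of `A`. Reading `c S` as the coefficient of
`∏_{i ∈ S} y_i ∏_{i ∈ A \ S} x_i`, these are the multilinear forms of degree `m` in the `y_i` that
are fixed by the shear `x_i ↦ x_i + y_i`. -/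
def primitiveFunctions (k : Type*) [CommRing k] (A : Finset α) (m : ℕ) :
    Submodule k (Finset α → k) where
  carrier := {c | (∀ S ∉ A.powersetCard m, c S = 0) ∧
    ∀ T ⊆ A, m < #T → ∑ S ∈ T.powersetCard m, c S = 0}
  add_mem' {c d} hc hd :=
    ⟨fun S hS => by simp [hc.1 S hS, hd.1 S hS],
      fun T hT hm => by simp [sum_add_distrib, hc.2 T hT hm, hd.2 T hT hm]⟩
  zero_mem' := by simp
  smul_mem' r c hc :=
    ⟨fun S hS => by simp [hc.1 S hS], fun T hT hm => by simp [← mul_sum, hc.2 T hT hm]⟩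

theorem primitiveFunctions_eq_bot [Finite α] (k : Type*) [CommRing k] {A : Finset α} {m : ℕ}
    (hm : 2 * m < #A) : primitiveFunctions k A m = ⊥ := by
  classical
  cases nonempty_fintype α
  refine (Submodule.eq_bot_iff _).mpr fun c hc => funext fun S₀ => ?_
  by_cases hS₀ : S₀ ∈ A.powersetCard m
  swap
  · exact hc.1 S₀ hS₀
  obtain ⟨hS₀A, hS₀m⟩ := mem_powersetCard.mp hS₀
  -- `S₀` is the only `m`-subset of `A` containing `S₀`; inclusion-exclusion turns sums over the
  -- sets containing `S₀` into sums over the `m`-subsets of the sets `A \ t` with `t ⊆ S₀`.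
  have hsuperset : ∑ S ∈ S₀.inf fun i => ({S | i ∉ S} : Finset (Finset α))ᶜ, c S = c S₀ := by
    refine sum_eq_single_of_mem S₀ (by simp [mem_inf]) fun S hS hne => hc.1 S fun hSA => hne ?_
    have hsub : S₀ ⊆ S := fun i hi => by simpa using mem_inf.mp hS i hi
    exact (eq_of_subset_of_card_le hsub (by rw [(mem_powersetCard.mp hSA).2, hS₀m])).symm
  have havoid : ∀ t ∈ S₀.powerset,
      ∑ S ∈ t.inf fun i => ({S | i ∉ S} : Finset (Finset α)), c S = 0 := by
    intro t ht
    have htm := card_le_card (mem_powerset.mp ht)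
    have hcard := card_sdiff_of_subset ((mem_powerset.mp ht).trans hS₀A)
    rw [← hc.2 (A \ t) sdiff_subset (by omega)]
    refine (sum_subset (fun S hS => ?_) fun S hS hS' => hc.1 S fun hSA => hS' ?_).symm
    · have hdisj := (subset_sdiff.mp (mem_powersetCard.mp hS).1).2
      simpa [mem_inf] using fun i hi => disjoint_right.mp hdisj hi
    · have hdisj : Disjoint S t := disjoint_right.mpr fun i hi => by simpa using mem_inf.mp hS i hi
      obtain ⟨hSA, hSm⟩ := mem_powersetCard.mp hSA
      exact mem_powersetCard.mpr ⟨subset_sdiff.mpr ⟨hSA, hdisj⟩, hSm⟩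
  rw [Pi.zero_apply, ← hsuperset, inclusion_exclusion_sum_inf_compl]
  exact sum_eq_zero fun t ht => by rw [havoid t ht, smul_zero]

theorem finrank_primitiveFunctions_le_choose (k : Type*) [Field k] (A : Finset α) (m : ℕ) :
    finrank k (primitiveFunctions k A m) ≤ (#A).choose m := by
  let restrict : primitiveFunctions k A m →ₗ[k] (A.powersetCard m → k) :=
    LinearMap.funLeft k k Subtype.val ∘ₗ (primitiveFunctions k A m).subtype
  have hinj : Function.Injective restrict := by
    refine (injective_iff_map_eq_zero restrict).mpr fun c hc => Subtype.ext <| funext fun S => ?_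
    by_cases hS : S ∈ A.powersetCard m
    · exact congrFun hc ⟨S, hS⟩
    · exact c.2.1 S hS
  simpa using LinearMap.finrank_le_finrank_of_injective hinj

section Insert

variable [DecidableEq α]

/-- The deletion of `a` from a function on finsets: its restriction to the finsets that avoid `a`,
extended by zero. -/
def deletionMap (k : Type*) [CommRing k] (a : α) : (Finset α → k) →ₗ[k] (Finset α → k) :=
  LinearMap.pi fun S => if a ∈ S then 0 else LinearMap.proj S

/-- The link of `a` in a function on finsets: `S ↦ c (insert a S)` on the finsets that avoid `a`,
extended by zero. -/
def linkMap (k : Type*) [CommRing k] (a : α) : (Finset α → k) →ₗ[k] (Finset α → k) :=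
  LinearMap.pi fun S => if a ∈ S then 0 else LinearMap.proj (insert a S)

variable {k : Type*} [CommRing k] {a : α} {A : Finset α} {m : ℕ}

theorem deletionMap_apply (c : Finset α → k) (S : Finset α) :
    deletionMap k a c S = if a ∈ S then 0 else c S := by
  by_cases h : a ∈ S <;> simp [deletionMap, h]

theorem linkMap_apply (c : Finset α → k) (S : Finset α) :
    linkMap k a c S = if a ∈ S then 0 else c (insert a S) := by
  by_cases h : a ∈ S <;> simp [linkMap, h]

theorem deletionMap_mem_primitiveFunctions (ha : a ∉ A) {c : Finset α → k}
    (hc : c ∈ primitiveFunctions k (insert a A) m) :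
    deletionMap k a c ∈ primitiveFunctions k A m := by
  refine ⟨fun S hS => ?_, fun T hT hm => ?_⟩
  · rw [deletionMap_apply]
    split_ifs with haS
    · rfl
    · refine hc.1 S fun hS' => hS ?_
      rwa [mem_powersetCard, subset_insert_iff_of_notMem haS, ← mem_powersetCard] at hS'
  · rw [← hc.2 T (hT.trans (subset_insert a A)) hm]
    refine sum_congr rfl fun S hS => ?_
    rw [deletionMap_apply, if_neg fun haS => ha (hT ((mem_powersetCard.mp hS).1 haS))]

theorem linkMap_mem_primitiveFunctions (ha : a ∉ A) {c : Finset α → k}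
    (hc : c ∈ primitiveFunctions k (insert a A) (m + 1)) (hker : deletionMap k a c = 0) :
    linkMap k a c ∈ primitiveFunctions k A m := by
  have hzero : ∀ S, a ∉ S → c S = 0 := fun S haS => by
    simpa [deletionMap_apply, haS] using congrFun hker S
  refine ⟨fun S hS => ?_, fun T hT hm => ?_⟩
  · rw [linkMap_apply]
    split_ifs with haS
    · rfl
    · refine hc.1 _ fun hS' => hS ?_
      rw [mem_powersetCard, insert_subset_insert_iff haS, card_insert_of_notMem haS] at hS'
      exact mem_powersetCard.mpr ⟨hS'.1, by omega⟩
  · have haT : a ∉ T := fun h => ha (hT h)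
    have haS : ∀ S ∈ T.powersetCard m, a ∉ S := fun S hS h => haT ((mem_powersetCard.mp hS).1 h)
    have hsum := hc.2 (insert a T) (insert_subset_insert a hT)
      (by rw [card_insert_of_notMem haT]; omega)
    rw [powersetCard_succ_insert haT, sum_union, sum_eq_zero, zero_add, sum_image] at hsum
    · rw [← hsum]
      exact sum_congr rfl fun S hS => by rw [linkMap_apply, if_neg (haS S hS)]
    · intro S hS S' hS' h
      rw [← erase_insert (haS S hS), h, erase_insert (haS S' hS')]
    · exact fun S hS => hzero S fun h => haT ((mem_powersetCard.mp hS).1 h)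
    · refine disjoint_left.mpr fun S hS hS' => ?_
      obtain ⟨S', -, rfl⟩ := mem_image.mp hS'
      exact haT ((mem_powersetCard.mp hS).1 (mem_insert_self a S'))

theorem ker_deletionMap_inf_ker_linkMap :
    LinearMap.ker (deletionMap k a) ⊓ LinearMap.ker (linkMap k a) = ⊥ := by
  refine (Submodule.eq_bot_iff _).mpr fun c hc => funext fun S => ?_
  by_cases haS : a ∈ S
  · simpa [linkMap_apply, insert_erase haS] using congrFun hc.2 (S.erase a)
  · simpa [deletionMap_apply, haS] using congrFun hc.1 S

theorem finrank_primitiveFunctions_insert_le [Finite α] (k : Type*) [Field k] (ha : a ∉ A)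
    (m : ℕ) :
    finrank k (primitiveFunctions k (insert a A) (m + 1)) ≤
      finrank k (primitiveFunctions k A (m + 1)) + finrank k (primitiveFunctions k A m) := by
  rw [← finrank_map_add_finrank_inf_ker (deletionMap k a),
    ← finrank_map_add_finrank_inf_ker (linkMap k a) (_ ⊓ _), inf_assoc,
    ker_deletionMap_inf_ker_linkMap, inf_bot_eq, finrank_bot, add_zero]
  gcongr
  · exact Submodule.finrank_mono <| Submodule.map_le_iff_le_comap.mpr fun c hc =>
      deletionMap_mem_primitiveFunctions ha hc
  · exact Submodule.finrank_mono <| Submodule.map_le_iff_le_comap.mpr fun c hc =>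
      linkMap_mem_primitiveFunctions ha hc.1 hc.2

end Insert

theorem finrank_primitiveFunctions_add_choose_le [Finite α] (k : Type*) [Field k] (A : Finset α)
    {m : ℕ} (hm : #A ≤ 2 * m + 1) :
    finrank k (primitiveFunctions k A m) + (#A).choose (m + 1) ≤ (#A).choose m := by
  classical
  induction A using Finset.induction_on generalizing m with
  | empty => simpa using finrank_primitiveFunctions_le_choose k (∅ : Finset α) m
  | insert a A ha ih =>
    obtain hm | hm := hm.eq_or_lt
    · rw [primitiveFunctions_eq_bot k (by omega), finrank_bot, hm, Nat.choose_symm_half, zero_add]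
    rw [card_insert_of_notMem ha] at hm ⊢
    obtain ⟨m, rfl⟩ : ∃ m', m = m' + 1 := ⟨m - 1, by omega⟩
    have hinsert := finrank_primitiveFunctions_insert_le k ha m
    have hnotMem := ih (m := m + 1) (by omega)
    have hmem := ih (m := m) (by omega)
    rw [Nat.choose_succ_succ' _ m, Nat.choose_succ_succ' _ (m + 1)]
    omega

end PrimitiveFunctions

section GraphMonomials

variable {k : Type} [CommRing k] {n : ℕ}

theorem mem_Rv {v : Fin n → ℕ} {f : PtRing k n} :
    f ∈ Rv k n v ↔
      (∀ g : Matrix.SpecialLinearGroup (Fin 2) k, subst k n (g : Matrix (Fin 2) (Fin 2) k) f = f) ∧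
        IsWeightedHomogeneous (fun p : Fin n × Fin 2 => Finsupp.single p.1 1) f
          (Finsupp.equivFunOnFinite.symm v) := by
  simp [Rv, sub_eq_zero, mem_weightedHomogeneousSubmodule]

theorem subst_bracket (g : Matrix (Fin 2) (Fin 2) k) (a b : Fin n) :
    subst k n g (bracket k n a b) = C g.det * bracket k n a b := by
  simp only [subst, bracket, Matrix.det_fin_two, map_sub, map_mul, aeval_X, if_true, one_ne_zero,
    if_false]
  ring

theorem isWeightedHomogeneous_bracket (a b : Fin n) :
    IsWeightedHomogeneous (fun p : Fin n × Fin 2 => Finsupp.single p.1 1) (bracket k n a b)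
      (Finsupp.single a 1 + Finsupp.single b 1 : Fin n →₀ ℕ) := by
  refine .sub ((isWeightedHomogeneous_X k _ (a, 0)).mul (isWeightedHomogeneous_X k _ (b, 1))) ?_
  rw [add_comm]
  exact (isWeightedHomogeneous_X k _ (b, 0)).mul (isWeightedHomogeneous_X k _ (a, 1))

theorem graphMonomial_cons (e : Fin n × Fin n) (Γ : Multiset (Fin n × Fin n)) :
    graphMonomial k n (e ::ₘ Γ) = bracket k n e.1 e.2 * graphMonomial k n Γ := by
  simp [graphMonomial]

theorem valence_cons (e : Fin n × Fin n) (Γ : Multiset (Fin n × Fin n)) :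
    Finsupp.equivFunOnFinite.symm (valence n (e ::ₘ Γ)) =
      Finsupp.single e.1 1 + Finsupp.single e.2 1 +
        Finsupp.equivFunOnFinite.symm (valence n Γ) := by
  ext i
  simp only [valence, Multiset.map_cons, Multiset.count_cons, Finsupp.add_apply,
    Finsupp.single_apply, Finsupp.equivFunOnFinite_symm_apply_apply, eq_comm (a := i)]
  ring

theorem graphMonomial_mem_Rv (Γ : Multiset (Fin n × Fin n)) :
    graphMonomial k n Γ ∈ Rv k n (valence n Γ) := by
  rw [mem_Rv]
  induction Γ using Multiset.induction_on with
  | empty =>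
    have hform : graphMonomial k n 0 = 1 := by simp [graphMonomial]
    have hvalence : Finsupp.equivFunOnFinite.symm (valence n 0) = 0 := by
      ext
      simp [valence]
    rw [hform, hvalence]
    exact ⟨fun g => map_one _, isWeightedHomogeneous_one k _⟩
  | cons e Γ ih =>
    refine ⟨fun g => ?_, ?_⟩
    · rw [graphMonomial_cons, map_mul, subst_bracket, ih.1 g, g.det_coe, map_one, one_mul]
    · rw [graphMonomial_cons, valence_cons]
      exact (isWeightedHomogeneous_bracket e.1 e.2).mul ih.2

/-- `Γ` is a partial matching of the points of `A` that leaves exactly the points of `U` unmatched.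
As in `graphMonomial`, `Γ` is a multiset of directed edges; the equation of multisets says that
each point of `A` either lies in `U` or is an endpoint of `Γ`, and only once. -/
def IsMatching (A U : Finset (Fin n)) (Γ : Multiset (Fin n × Fin n)) : Prop :=
  U.val + (Γ.map Prod.fst + Γ.map Prod.snd) = A.val

theorem IsMatching.card_eq {A U : Finset (Fin n)} {Γ : Multiset (Fin n × Fin n)}
    (h : IsMatching A U Γ) : #U + 2 * Γ.card = #A := by
  have := congrArg Multiset.card h
  simp only [Multiset.card_add, Multiset.card_map, card_val] at this
  omega

theorem IsMatching.valence_eq_one {Γ : Multiset (Fin n × Fin n)} (h : IsMatching univ ∅ Γ) :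
    valence n Γ = fun _ => 1 := by
  funext i
  have := congrArg (Multiset.count i) h
  simpa [valence, Multiset.count_eq_one_of_mem] using this

variable (k) in
/-- The product of the brackets of the edges of `Γ` and of the variables `x_i` for `i ∈ U`. -/
noncomputable def matchingForm (U : Finset (Fin n)) (Γ : Multiset (Fin n × Fin n)) : PtRing k n :=
  (∏ i ∈ U, X (i, 0)) * graphMonomial k n Γ

variable (k) in
/-- The forms of the partial matchings of `A` with `m` parts, a part being an edge or an unmatched
point. These forms have degree `m` in the `x_i` and `#A - m` in the `y_i`. -/
def matchingForms (A : Finset (Fin n)) (m : ℕ) : Set (PtRing k n) :=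
  {f | ∃ U Γ, IsMatching A U Γ ∧ #U + Γ.card = m ∧ matchingForm k U Γ = f}

theorem finite_matchingForms (A : Finset (Fin n)) (m : ℕ) : (matchingForms k A m).Finite := by
  refine (Set.finite_range fun p : Finset (Fin n) × (Σ j : Fin (m + 1), Sym (Fin n × Fin n) j) =>
    matchingForm k p.1 (p.2.2 : Multiset (Fin n × Fin n))).subset ?_
  rintro _ ⟨U, Γ, -, hm, rfl⟩
  exact ⟨⟨U, ⟨Γ.card, by omega⟩, ⟨Γ, rfl⟩⟩, rfl⟩

variable (k) in
/-- The specialization `x_a = 0`, `y_a = 1`. -/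
noncomputable def specializeAt (a : Fin n) : PtRing k n →ₐ[k] PtRing k n :=
  aeval fun p => if p.1 = a then ![0, 1] p.2 else X p

theorem specializeAt_matchingForm {U : Finset (Fin n)} {Γ : Multiset (Fin n × Fin n)} {a : Fin n}
    (ha : a ∉ U.val + (Γ.map Prod.fst + Γ.map Prod.snd)) :
    specializeAt k a (matchingForm k U Γ) = matchingForm k U Γ := by
  have hne : ∀ i ∈ U.val + (Γ.map Prod.fst + Γ.map Prod.snd), i ≠ a :=
    fun i hi => ne_of_mem_of_not_mem hi ha
  rw [matchingForm, graphMonomial, map_mul, map_prod, map_multiset_prod, Multiset.map_map]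
  congr 1
  · exact prod_congr rfl fun i hi => by simp [specializeAt, hne i (Multiset.mem_add.mpr (.inl hi))]
  · congr 1
    refine Multiset.map_congr rfl fun e he => ?_
    have h1 : e.1 ≠ a := hne _ (by simp [Multiset.mem_map_of_mem Prod.fst he])
    have h2 : e.2 ≠ a := hne _ (by simp [Multiset.mem_map_of_mem Prod.snd he])
    simp [specializeAt, bracket, h1, h2]

theorem X_mul_mem_matchingForms {A : Finset (Fin n)} {a : Fin n} (ha : a ∉ A) {m : ℕ}
    {f : PtRing k n} (hf : f ∈ matchingForms k A m) :
    X (a, 0) * f ∈ matchingForms k (insert a A) (m + 1) := by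
  obtain ⟨U, Γ, h, hm, rfl⟩ := hf
  have haU : a ∉ U := fun haU => ha <| by
    rw [← mem_val, ← h]
    exact Multiset.mem_add.mpr (.inl haU)
  refine ⟨insert a U, Γ, ?_, ?_, ?_⟩
  · rw [IsMatching, insert_val_of_notMem haU, insert_val_of_notMem ha, Multiset.cons_add, h]
  · rw [card_insert_of_notMem haU]
    omega
  · rw [matchingForm, prod_insert haU, mul_assoc, matchingForm]

theorem exists_specializeAt_eq {A : Finset (Fin n)} {a : Fin n} (ha : a ∉ A) {m : ℕ}
    (hm : #A < 2 * m) {f : PtRing k n} (hf : f ∈ matchingForms k A m) :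
    ∃ F ∈ matchingForms k (insert a A) m, specializeAt k a F = f := by
  obtain ⟨U, Γ, h, hUΓ, rfl⟩ := hf
  have hcard := h.card_eq
  obtain ⟨u, hu⟩ : U.Nonempty := card_pos.mp (by omega)
  obtain ⟨W, huW, rfl⟩ : ∃ W, u ∉ W ∧ insert u W = U :=
    ⟨U.erase u, notMem_erase u U, insert_erase hu⟩
  rw [card_insert_of_notMem huW] at hUΓ
  rw [IsMatching, insert_val_of_notMem huW, Multiset.cons_add] at h
  have hau : u ≠ a := by
    rintro rfl
    exact ha (by rw [← mem_val, ← h]; exact Multiset.mem_cons_self u _)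
  have haW : a ∉ W.val + (Γ.map Prod.fst + Γ.map Prod.snd) := fun haW =>
    ha (by rw [← mem_val, ← h]; exact Multiset.mem_cons_of_mem haW)
  refine ⟨_, ⟨W, (u, a) ::ₘ Γ, ?_, ?_, rfl⟩, ?_⟩
  · rw [IsMatching, insert_val_of_notMem ha, ← h, Multiset.map_cons, Multiset.map_cons,
      Multiset.cons_add, Multiset.add_cons, Multiset.add_cons, Multiset.add_cons,
      Multiset.cons_swap]
  · rw [Multiset.card_cons]
    omega
  · have hbracket : specializeAt k a (bracket k n u a) = X (u, 0) := by
      simp [specializeAt, bracket, hau]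
    rw [matchingForm, graphMonomial_cons, mul_left_comm, ← matchingForm, map_mul, hbracket,
      specializeAt_matchingForm haW, matchingForm, matchingForm, prod_insert huW, mul_assoc]

end GraphMonomials

section MatchingSpan

variable (k : Type) [Field k] {n : ℕ}

/-- The span of the forms of the partial matchings of `A` with `m` parts. Its elements are
multilinear forms in the points of `A` that are fixed by the shears `y_i ↦ y_i + t x_i`. -/
noncomputable def matchingSpan (A : Finset (Fin n)) (m : ℕ) : Submodule k (PtRing k n) :=
  Submodule.span k (matchingForms k A m)

instance (A : Finset (Fin n)) (m : ℕ) : FiniteDimensional k (matchingSpan k A m) :=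
  FiniteDimensional.span_of_finite k (finite_matchingForms A m)

theorem finrank_matchingSpan_add_le {A : Finset (Fin n)} {a : Fin n} (ha : a ∉ A) {m : ℕ}
    (hm : #A < 2 * (m + 1)) :
    finrank k (matchingSpan k A (m + 1)) + finrank k (matchingSpan k A m) ≤
      finrank k (matchingSpan k (insert a A) (m + 1)) := by
  let mulX : PtRing k n →ₗ[k] PtRing k n := LinearMap.mulLeft k (X (a, 0))
  have hmulX : Function.Injective mulX := mul_right_injective₀ (X_ne_zero _)
  rw [← finrank_map_add_finrank_inf_ker (specializeAt k a).toLinearMap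
    (matchingSpan k (insert a A) (m + 1)),
    (Submodule.equivMapOfInjective mulX hmulX (matchingSpan k A m)).finrank_eq]
  gcongr <;> apply Submodule.finrank_mono
  · refine Submodule.span_le.mpr fun f hf => ?_
    obtain ⟨F, hF, hFf⟩ := exists_specializeAt_eq ha hm hf
    exact ⟨F, Submodule.subset_span hF, hFf⟩
  · refine Submodule.map_span_le _ _ _ |>.mpr fun f hf =>
      ⟨Submodule.subset_span (X_mul_mem_matchingForms ha hf), ?_⟩
    simp [mulX, specializeAt]

theorem choose_le_finrank_matchingSpan_add (A : Finset (Fin n)) {m : ℕ} (hm : #A ≤ 2 * m + 1) :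
    (#A).choose m ≤ finrank k (matchingSpan k A m) + (#A).choose (m + 1) := by
  induction A using Finset.induction_on generalizing m with
  | empty =>
    cases m with
    | zero =>
      have hone : (1 : PtRing k n) ∈ matchingSpan k ∅ 0 :=
        Submodule.subset_span ⟨∅, 0, by simp [IsMatching, matchingForm, graphMonomial]⟩
      have := Submodule.one_le_finrank_iff.mpr ((Submodule.ne_bot_iff _).mpr ⟨1, hone, one_ne_zero⟩)
      simpa using this
    | succ m => simp
  | insert a A ha ih =>
    rw [card_insert_of_notMem ha] at hm ⊢
    obtain hm | hm := hm.eq_or_lt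
    · rw [hm, Nat.choose_symm_half]
      exact Nat.le_add_left _ _
    obtain ⟨m, rfl⟩ : ∃ m', m = m' + 1 := ⟨m - 1, by omega⟩
    have hinsert := finrank_matchingSpan_add_le k ha (m := m) (by omega)
    have hunmatched := ih (m := m) (by omega)
    have hmatched := ih (m := m + 1) (by omega)
    rw [Nat.choose_succ_succ' _ m, Nat.choose_succ_succ' _ (m + 1)]
    omega

theorem matchingSpan_univ_le_Rv (m : ℕ) :
    matchingSpan k univ m ≤ Rv k (2 * m) fun _ => 1 := by
  refine Submodule.span_le.mpr ?_
  rintro _ ⟨U, Γ, h, hm, rfl⟩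
  have hcard := h.card_eq
  rw [card_univ, Fintype.card_fin] at hcard
  obtain rfl : U = ∅ := card_eq_zero.mp (by omega)
  have hmem := graphMonomial_mem_Rv (k := k) Γ
  rwa [h.valence_eq_one, ← one_mul (graphMonomial _ _ _)] at hmem

end MatchingSpan

section Values

variable {k : Type} [CommRing k] {n : ℕ}

theorem add_eq_of_mem_support {v : Fin n → ℕ} {f : PtRing k n}
    (hf : IsWeightedHomogeneous (fun p : Fin n × Fin 2 => Finsupp.single p.1 1) f
      (Finsupp.equivFunOnFinite.symm v)) {d : Fin n × Fin 2 →₀ ℕ} (hd : d ∈ f.support)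
    (i : Fin n) : d (i, 0) + d (i, 1) = v i := by
  have hweight := DFunLike.congr_fun (hf (mem_support_iff.mp hd)) i
  rw [Finsupp.weight_apply, Finsupp.sum_fintype _ _ (by simp)] at hweight
  simpa [Finsupp.finsetSum_apply, Fintype.sum_prod_type, Finsupp.single_apply,
    sum_add_distrib] using hweight

theorem prod_pow_eq (p : Fin n × Fin 2 → k) (d : Fin n × Fin 2 →₀ ℕ) :
    ∏ q, p q ^ d q = ∏ i, p (i, 0) ^ d (i, 0) * p (i, 1) ^ d (i, 1) := by
  simp [Fintype.prod_prod_type]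

theorem eval_mul_of_isWeightedHomogeneous {v : Fin n → ℕ} {f : PtRing k n}
    (hf : IsWeightedHomogeneous (fun p : Fin n × Fin 2 => Finsupp.single p.1 1) f
      (Finsupp.equivFunOnFinite.symm v)) (s : Fin n → k) (p : Fin n × Fin 2 → k) :
    eval (fun q => s q.1 * p q) f = (∏ i, s i ^ v i) * eval p f := by
  rw [eval_eq', eval_eq', mul_sum]
  refine sum_congr rfl fun d hd => ?_
  have hscale : ∏ q, s q.1 ^ d q = ∏ i, s i ^ v i := by
    rw [prod_pow_eq (fun q => s q.1)]
    exact prod_congr rfl fun i _ => by rw [← pow_add, add_eq_of_mem_support hf hd]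
  simp_rw [mul_pow, prod_mul_distrib, hscale]
  ring

variable (k) in
/-- The point of `(k²)ⁿ` whose `i`-th component is `(0, 1)` for `i ∈ S` and `(1, 0)` otherwise. -/
def vertex (S : Finset (Fin n)) : Fin n × Fin 2 → k :=
  fun p => if (p.1 ∈ S ↔ p.2 = 1) then 1 else 0

theorem eval_eq_sum_vertex {f : PtRing k n}
    (hf : IsWeightedHomogeneous (fun p : Fin n × Fin 2 => Finsupp.single p.1 1) f
      (Finsupp.equivFunOnFinite.symm fun _ => 1)) (p : Fin n × Fin 2 → k) :
    eval p f = ∑ S, eval (vertex k S) f * ((∏ i ∈ S, p (i, 1)) * ∏ i ∈ Sᶜ, p (i, 0)) := by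
  simp only [eval_eq', sum_mul]
  rw [sum_comm]
  refine sum_congr rfl fun d hd => ?_
  simp only [mul_assoc, ← mul_sum]
  congr 1
  have hexp : ∀ i, d (i, 0) = 0 ∧ d (i, 1) = 1 ∨ d (i, 0) = 1 ∧ d (i, 1) = 0 := fun i => by
    have := add_eq_of_mem_support hf hd i
    omega
  have hvertex : ∀ S : Finset (Fin n), ∏ q, vertex k S q ^ d q =
      (∏ i ∈ S, (0 : k) ^ d (i, 0)) * ∏ i ∈ Sᶜ, (0 : k) ^ d (i, 1) := fun S => by
    rw [prod_pow_eq, ← prod_mul_prod_compl S]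
    congr 1 <;> refine prod_congr rfl fun i hi => ?_
    · simp [vertex, hi]
    · simp [vertex, mem_compl.mp hi]
  -- One of `d (i, 0)`, `d (i, 1)` is `0` and the other is `1`, so the powers of `0` are indicators.
  calc ∏ q, p q ^ d q
      = ∏ i, ((0 : k) ^ d (i, 0) * p (i, 1) + (0 : k) ^ d (i, 1) * p (i, 0)) := by
        rw [prod_pow_eq]
        exact prod_congr rfl fun i _ => by
          obtain ⟨h0, h1⟩ | ⟨h0, h1⟩ := hexp i <;> simp [h0, h1]
    _ = ∑ S, (∏ q, vertex k S q ^ d q) * ((∏ i ∈ S, p (i, 1)) * ∏ i ∈ Sᶜ, p (i, 0)) := by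
        rw [Fintype.prod_add]
        refine sum_congr rfl fun S _ => ?_
        rw [hvertex, prod_mul_distrib, prod_mul_distrib]
        ring

theorem eval_subst (g : Matrix (Fin 2) (Fin 2) k) (f : PtRing k n) (p : Fin n × Fin 2 → k) :
    eval p (subst k n g f) = eval (fun q => ∑ j, g j q.2 * p (q.1, j)) f := by
  have hcomp : (aeval p).comp (subst k n g) = aeval fun q => ∑ j, g j q.2 * p (q.1, j) := by
    refine algHom_ext fun ⟨i, j⟩ => ?_
    fin_cases j <;> simp [subst]
  simpa [coe_aeval_eq_eval] using DFunLike.congr_fun hcomp f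

theorem eval_sum_mul_of_mem_Rv {v : Fin n → ℕ} {f : PtRing k n} (hf : f ∈ Rv k n v)
    {g : Matrix (Fin 2) (Fin 2) k} (hg : g.det = 1) (p : Fin n × Fin 2 → k) :
    eval (fun q => ∑ j, g j q.2 * p (q.1, j)) f = eval p f := by
  rw [← eval_subst, (mem_Rv.mp hf).1 ⟨g, hg⟩]

theorem sum_powerset_eval_vertex {f : PtRing k n} (hf : f ∈ Rv k n fun _ => 1)
    (T : Finset (Fin n)) : ∑ S ∈ T.powerset, eval (vertex k S) f = eval (vertex k T) f := by
  have hshear : (fun q : Fin n × Fin 2 => ∑ j, !![1, 0; 1, 1] j q.2 * vertex k T (q.1, j)) =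
      fun q => if q.2 = 0 ∨ q.1 ∈ T then 1 else 0 := by
    funext ⟨i, j⟩
    by_cases hi : i ∈ T <;> fin_cases j <;> simp [vertex, hi]
  rw [← eval_sum_mul_of_mem_Rv hf (g := !![1, 0; 1, 1]) (by simp), hshear,
    eval_eq_sum_vertex (mem_Rv.mp hf).2]
  simp only [one_ne_zero, false_or, true_or, if_true, prod_const_one, mul_one, prod_ite_zero,
    mul_ite, mul_zero, ← subset_iff, ← sum_filter, ← filter_subset_univ]

variable (k n) in
/-- The values of a polynomial at the points `vertex k S`, which determine a multilinear form. -/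
noncomputable def vertexValues : PtRing k n →ₗ[k] (Finset (Fin n) → k) :=
  LinearMap.pi fun S => (aeval (vertex k S)).toLinearMap

theorem vertexValues_apply (f : PtRing k n) (S : Finset (Fin n)) :
    vertexValues k n f S = eval (vertex k S) f := by
  simp [vertexValues]

end Values

section Invariants

variable {k : Type} [Field k] [Infinite k]

theorem eval_vertex_eq_zero {n : ℕ} {f : PtRing k n} (hf : f ∈ Rv k n fun _ => 1)
    {S : Finset (Fin n)} (hS : 2 * #S ≠ n) : eval (vertex k S) f = 0 := by
  by_contra hne
  -- The extra factor `a` makes the identity valid at `a = 0` too, hence an identity of polynomials.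
  have hpow : ∀ a : k, a ^ (#Sᶜ + 1) = a ^ (#S + 1) := fun a => by
    obtain rfl | ha := eq_or_ne a 0
    · simp
    have htorus : (fun q : Fin n × Fin 2 => ∑ j, !![a, 0; 0, a⁻¹] j q.2 * vertex k S (q.1, j)) =
        fun q => (if q.1 ∈ S then a⁻¹ else a) * vertex k S q := by
      funext ⟨i, j⟩
      by_cases hi : i ∈ S <;> fin_cases j <;> simp [vertex, hi]
    have hinv := eval_sum_mul_of_mem_Rv hf (g := !![a, 0; 0, a⁻¹]) (by simp [ha]) (vertex k S)
    rw [htorus, eval_mul_of_isWeightedHomogeneous (mem_Rv.mp hf).2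
      fun i => if i ∈ S then a⁻¹ else a, mul_eq_right₀ hne] at hinv
    have hprod : (a ^ #S)⁻¹ * a ^ #Sᶜ = 1 := by
      simpa [prod_ite, filter_not, ← compl_eq_univ_sdiff] using hinv
    rw [pow_succ, pow_succ, (inv_mul_eq_one₀ (pow_ne_zero _ ha)).mp hprod]
  have hdegree := congrArg Polynomial.natDegree (Polynomial.funext
    (p := Polynomial.X ^ (#Sᶜ + 1)) (q := Polynomial.X ^ (#S + 1)) (by simpa using hpow))
  rw [Polynomial.natDegree_X_pow, Polynomial.natDegree_X_pow] at hdegree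
  have hcard := card_add_card_compl S
  rw [Fintype.card_fin] at hcard
  omega

theorem vertexValues_mem_primitiveFunctions {m : ℕ} {f : PtRing k (2 * m)}
    (hf : f ∈ Rv k (2 * m) fun _ => 1) :
    vertexValues k (2 * m) f ∈ primitiveFunctions k univ m := by
  refine ⟨fun S hS => ?_, fun T _ hT => ?_⟩
  · rw [vertexValues_apply]
    exact eval_vertex_eq_zero hf fun h => hS (mem_powersetCard_univ.mpr (by omega))
  · have hsum := sum_powerset_eval_vertex hf T
    rw [eval_vertex_eq_zero hf (by omega)] at hsum
    rw [← hsum]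
    refine sum_subset_zero_on_sdiff (fun S hS => mem_powerset.mpr (mem_powersetCard.mp hS).1)
      (fun S hS => eval_vertex_eq_zero hf fun h => ?_) fun S _ => vertexValues_apply f S
    obtain ⟨hST, hSm⟩ := mem_sdiff.mp hS
    exact hSm (mem_powersetCard.mpr ⟨mem_powerset.mp hST, by omega⟩)

theorem eq_zero_of_vertexValues_eq_zero {n : ℕ} {f : PtRing k n} (hf : f ∈ Rv k n fun _ => 1)
    (hzero : vertexValues k n f = 0) : f = 0 := by
  refine MvPolynomial.funext fun p => ?_
  rw [eval_eq_sum_vertex (mem_Rv.mp hf).2, map_zero]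
  exact sum_eq_zero fun S _ => by rw [← vertexValues_apply, hzero, Pi.zero_apply, zero_mul]

theorem injective_vertexValues_domRestrict (n : ℕ) :
    Function.Injective ((vertexValues k n).domRestrict (Rv k n fun _ => 1)) :=
  (injective_iff_map_eq_zero _).mpr fun f hf =>
    Subtype.ext (eq_zero_of_vertexValues_eq_zero f.2 hf)

instance (n : ℕ) : FiniteDimensional k (Rv k n fun _ => 1) :=
  .of_injective _ (injective_vertexValues_domRestrict n)

variable (k) in
theorem finrank_Rv_le_finrank_primitiveFunctions (m : ℕ) :
    finrank k (Rv k (2 * m) fun _ => 1) ≤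
      finrank k (primitiveFunctions k (univ : Finset (Fin (2 * m))) m) := by
  rw [← LinearMap.finrank_range_of_inj (injective_vertexValues_domRestrict (2 * m))]
  apply Submodule.finrank_mono
  rintro _ ⟨f, rfl⟩
  exact vertexValues_mem_primitiveFunctions f.2

end Invariants

theorem stmt11_general (k : Type) [Field k] [Infinite k] (m : ℕ) :
    finrank k (Rv k (2 * m) fun _ => 1) = catalan m := by
  have hcard : #(univ : Finset (Fin (2 * m))) = 2 * m := by simp
  have hprimitive := finrank_primitiveFunctions_add_choose_le k univ (m := m) (by rw [hcard]; omega)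
  have hmatching := choose_le_finrank_matchingSpan_add k univ (m := m) (by rw [hcard]; omega)
  have hupper := finrank_Rv_le_finrank_primitiveFunctions k m
  have hlower := Submodule.finrank_mono (matchingSpan_univ_le_Rv k m)
  have hcatalan := catalan_add_choose_succ m
  rw [hcard] at hprimitive hmatching
  omega

/-- For eight points, the space of invariants of multidegree `(1,…,1)` has dimension 14. -/
theorem stmt11 (k : Type) [Field k] [CharZero k] :
    Module.finrank k ↥(Rv k 8 fun _ => 1) = 14 := by
  rw [stmt11_general k 4]
  simp [catalan_eq_centralBinom_div, Nat.centralBinom, Nat.choose]
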